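/- Let p be a prime number with p > 3 and let n be a positive integer. Then the function f : ℝ → ℝ defined by f(x) = (sinh((p+1)x/p)/sinh(x)) · (sinh(x/p))^n/(sinh((p−1)x/p))^n for x ≠ 0, extended by continuity at x = 0, is not positive definite. -/

import Mathlib

open scoped ComplexOrder

/-- A function `φ : ℝ → ℂ` is positive definite if for every `n`, all real numbers
`x 1, …, x n` and complex numbers `c 1, …, c n`, the sum
`∑ i j, c i * conj (c j) * φ (x i - x j)` is a nonnegative real number. -/
def IsPosDefFun (φ : ℝ → ℂ) : Prop :=
  ∀ (n : ℕ) (x : Fin n → ℝ) (c : Fin n → ℂ),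
    0 ≤ ∑ i, ∑ j, c i * (starRingEnd ℂ) (c j) * φ (x i - x j)


theorem IsPosDefFun.sum_nonneg {φ : ℝ → ℂ} (h : IsPosDefFun φ) {ι : Type*} [Fintype ι]
    (x : ι → ℝ) (c : ι → ℂ) :
    0 ≤ ∑ i, ∑ j, c i * (starRingEnd ℂ) (c j) * φ (x i - x j) := by
  let e := (Fintype.equivFin ι).symm
  have := h _ (x ∘ e) (c ∘ e)
  rw [← e.sum_comp]
  simp_rw [← e.sum_comp (fun j => c _ * (starRingEnd ℂ) (c j) * φ (x _ - x j))]
  exact this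

theorem IsPosDefFun.apply_zero_nonneg {φ : ℝ → ℂ} (h : IsPosDefFun φ) : 0 ≤ φ 0 := by
  simpa using h 1 0 1

theorem IsPosDefFun.second_difference {φ : ℝ → ℂ} (h : IsPosDefFun φ) (t : ℝ) :
    IsPosDefFun fun x => 2 * φ x - φ (x + t) - φ (x - t) := by
  intro n x c
  have := h.sum_nonneg (ι := Fin n ⊕ Fin n) (Sum.elim x fun i => x i + t)
    (Sum.elim c fun i => -c i)
  simp only [Fintype.sum_sum_type, Sum.elim_inl, Sum.elim_inr, ← Finset.sum_add_distrib] at this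
  convert this using 4 with i _ j _
  rw [add_sub_add_right_eq_sub, sub_add_eq_sub_sub, add_sub_right_comm, map_neg]
  ring

theorem IsPosDefFun.of_tendsto {ι : Type*} {l : Filter ι} [l.NeBot] {φ : ι → ℝ → ℂ} {ψ : ℝ → ℂ}
    (h : ∀ᶠ t in l, IsPosDefFun (φ t))
    (hψ : ∀ x, Filter.Tendsto (fun t => φ t x) l (nhds (ψ x))) : IsPosDefFun ψ := by
  intro n x c
  refine ge_of_tendsto (tendsto_finsetSum _ fun i _ => tendsto_finsetSum _ fun j _ =>
    (hψ (x i - x j)).const_mul _) ?_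
  filter_upwards [h] with t ht using ht n x c

theorem IsPosDefFun.const_mul {φ : ℝ → ℂ} (h : IsPosDefFun φ) {a : ℂ} (ha : 0 ≤ a) :
    IsPosDefFun fun x => a * φ x := by
  intro n x c
  simpa only [Finset.mul_sum, mul_left_comm a] using mul_nonneg ha (h n x c)

theorem tendsto_second_difference {G : ℂ → ℂ} {z : ℂ} (hG : AnalyticAt ℂ G z) :
    Filter.Tendsto (fun t : ℂ => (t ^ 2)⁻¹ * (2 * G z - G (z + t) - G (z - t)))
      (nhdsWithin 0 {0}ᶜ) (nhds (-deriv (deriv G) z)) := by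
  obtain ⟨q, hq⟩ := hG
  have h1 := hq.has_fpower_series_dslope_fslope
  have h2 := h1.has_fpower_series_dslope_fslope
  set D := dslope G z with hD
  set E := dslope D z with hE
  have hDE : ∀ w, D w = D z + (w - z) * E w := fun w => by
    have := sub_smul_dslope D z w
    rw [smul_eq_mul] at this
    rw [hE, this]; ring
  have hGE : ∀ w, G w = G z + (w - z) * D w := fun w => by
    have := sub_smul_dslope G z w
    rw [smul_eq_mul] at this
    rw [hD, this]; ring
  have hval : deriv (deriv G) z = 2 * E z := by
    have hev : deriv G =ᶠ[nhds z] fun w => D w + (w - z) * deriv D w := by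
      filter_upwards [h1.analyticAt.eventually_analyticAt] with w hw
      have h := ((hasDerivAt_id w).sub_const z).mul hw.differentiableAt.hasDerivAt
      have h' := (h.const_add (G z)).congr_of_eventuallyEq (Filter.Eventually.of_forall hGE)
      rw [h'.deriv]; simp
    rw [hev.deriv_eq]
    have h := h1.analyticAt.differentiableAt.hasDerivAt.add
      (((hasDerivAt_id z).sub_const z).mul h1.analyticAt.deriv.differentiableAt.hasDerivAt)
    have h' := h.deriv
    simp only [id, sub_self, zero_mul, add_zero, one_mul] at h'
    rw [hE, dslope_same]
    refine Eq.trans ?_ (h'.trans (two_mul _).symm)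
    rfl
  have hc : ContinuousAt E z := h2.analyticAt.continuousAt
  have hlim : Filter.Tendsto (fun t : ℂ => -(E (z + t) + E (z - t))) (nhds 0)
      (nhds (-(E z + E z))) := by
    refine ((hc.tendsto.comp ?_).add (hc.tendsto.comp ?_)).neg
    · exact Continuous.tendsto' (by fun_prop) _ _ (by simp)
    · exact Continuous.tendsto' (by fun_prop) _ _ (by simp)
  rw [hval, two_mul (E z)]
  refine (hlim.mono_left nhdsWithin_le_nhds).congr' ?_
  filter_upwards [self_mem_nhdsWithin] with t ht
  have ht : t ≠ 0 := ht
  rw [hGE (z + t), hGE (z - t), hDE (z + t), hDE (z - t)]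
  field_simp
  ring

theorem IsPosDefFun.neg_deriv_deriv {G : ℂ → ℂ} (hG : ∀ x : ℝ, AnalyticAt ℂ G x)
    (h : IsPosDefFun fun x => G x) : IsPosDefFun fun x => -deriv (deriv G) x := by
  refine IsPosDefFun.of_tendsto (l := nhdsWithin (0 : ℝ) {0}ᶜ)
    (φ := fun t x => ((t : ℂ) ^ 2)⁻¹ * (2 * G x - G ((x + t : ℝ) : ℂ) - G ((x - t : ℝ) : ℂ)))
    (Filter.Eventually.of_forall fun t => ?_) fun x => ?_
  · refine (h.second_difference t).const_mul ?_
    have : (0 : ℝ) ≤ (t ^ 2)⁻¹ := by positivity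
    exact_mod_cast this
  · have ht : Filter.Tendsto (fun t : ℝ => (t : ℂ)) (nhdsWithin 0 {0}ᶜ) (nhdsWithin 0 {0}ᶜ) := by
      refine tendsto_nhdsWithin_iff.2 ⟨(Continuous.tendsto' (by fun_prop) _ _ (by simp)).mono_left
        nhdsWithin_le_nhds, ?_⟩
      filter_upwards [self_mem_nhdsWithin] with t ht
      simpa using ht
    simpa [Function.comp_def] using (tendsto_second_difference (hG x)).comp ht

theorem IsPosDefFun.iteratedDeriv {G : ℂ → ℂ} (hG : ∀ x : ℝ, AnalyticAt ℂ G x)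
    (h : IsPosDefFun fun x => G x) (k : ℕ) :
    IsPosDefFun fun x => (-1) ^ k * iteratedDeriv (2 * k) G x := by
  induction k with
  | zero => simpa using h
  | succ k ih =>
    have := ih.neg_deriv_deriv (G := fun z => (-1) ^ k * _root_.iteratedDeriv (2 * k) G z)
      fun x => analyticAt_const.mul
        (by rw [iteratedDeriv_eq_iterate]; exact (hG x).iterated_deriv _)
    convert this using 2 with x
    simp only [deriv_const_mul_field', mul_add, mul_one, iteratedDeriv_succ]
    ring

/-- A positive definite function that extends holomorphically to a disc about the origin has
nonnegative symmetrized values on the imaginary axis. -/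
theorem IsPosDefFun.nonneg_imaginary {G : ℂ → ℂ} (hG : ∀ x : ℝ, AnalyticAt ℂ G x)
    (h : IsPosDefFun fun x => G x) {r y : ℝ} (hr : DifferentiableOn ℂ G (Metric.ball 0 r))
    (hy : |y| < r) : 0 ≤ G (y * Complex.I) + G (-(y * Complex.I)) := by
  have h1 := Complex.hasSum_taylorSeries_on_ball hr (z := y * Complex.I) (by simpa using hy)
  have h2 := Complex.hasSum_taylorSeries_on_ball hr (z := -(y * Complex.I)) (by simpa using hy)
  refine HasSum.nonneg (fun m => ?_) (h1.add h2)
  simp only [sub_zero, smul_eq_mul]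
  rcases m.even_or_odd' with ⟨k, rfl | rfl⟩
  · have h3 := (h.iteratedDeriv hG k).apply_zero_nonneg
    have h4 : (0 : ℂ) ≤ (((2 * k).factorial : ℝ)⁻¹ * (y ^ 2) ^ k * 2 : ℝ) := by
      exact_mod_cast (by positivity)
    convert mul_nonneg h4 h3 using 1
    rw [pow_mul, pow_mul, neg_sq, mul_pow, Complex.I_sq, mul_neg_one, neg_pow]
    push_cast
    ring
  · rw [(odd_two_mul_add_one k).neg_pow]
    apply le_of_eq
    ring

/-- The entire function `sinh z / z`. -/
noncomputable def sinhc : ℂ → ℂ := dslope Complex.sinh 0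

theorem sinhc_zero : sinhc 0 = 1 := by simp [sinhc]

theorem sinhc_of_ne_zero {z : ℂ} (hz : z ≠ 0) : sinhc z = Complex.sinh z / z := by
  simp [sinhc, dslope_of_ne _ hz, slope_def_field]

theorem differentiable_sinhc : Differentiable ℂ sinhc := by
  rw [← differentiableOn_univ]
  exact (Complex.differentiableOn_dslope Filter.univ_mem).2
    Complex.differentiable_sinh.differentiableOn

theorem sinhc_ne_zero_of_real (x : ℝ) : sinhc x ≠ 0 := by
  by_cases hx : x = 0
  · simp [hx, sinhc_zero]
  · have hs : Real.sinh x ≠ 0 := by simpa using hx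
    rw [sinhc_of_ne_zero (by exact_mod_cast hx)]
    exact_mod_cast div_ne_zero hs hx

theorem sinhc_ne_zero_of_norm_lt {z : ℂ} (hz : ‖z‖ < Real.pi) : sinhc z ≠ 0 := by
  by_cases h0 : z = 0
  · simp [h0, sinhc_zero]
  rw [sinhc_of_ne_zero h0]
  refine div_ne_zero (fun hs => ?_) h0
  have : Complex.sin (z * Complex.I) = 0 := by rw [Complex.sin_mul_I, hs, zero_mul]
  obtain ⟨k, hk⟩ := Complex.sin_eq_zero_iff.1 this
  have hn := congrArg norm hk
  simp only [norm_mul, Complex.norm_I, mul_one, Complex.norm_intCast, Complex.norm_real,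
    Real.norm_eq_abs, abs_of_pos Real.pi_pos] at hn
  rw [hn] at hz
  have hk1 : |(k : ℝ)| < 1 := by nlinarith [Real.pi_pos]
  have hk0 : k = 0 := by
    rw [← Int.abs_lt_one_iff]; exact_mod_cast hk1
  simp [hk0, h0] at hk

/-- The holomorphic extension of the quotient of hyperbolic sines. -/
noncomputable def sinhQuotient (p : ℝ) (n : ℕ) (z : ℂ) : ℂ :=
  (p + 1) / p * (1 / (p - 1)) ^ n *
    (sinhc ((((p + 1) / p : ℝ) : ℂ) * z) / sinhc z *
      (sinhc (((1 / p : ℝ) : ℂ) * z) / sinhc ((((p - 1) / p : ℝ) : ℂ) * z)) ^ n)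

theorem sinhQuotient_of_ne_zero {p : ℝ} (hp : 1 < p) (n : ℕ) {z : ℂ} (hz : z ≠ 0) :
    sinhQuotient p n z = Complex.sinh ((p + 1) * z / p) / Complex.sinh z *
      (Complex.sinh (z / p) ^ n / Complex.sinh ((p - 1) * z / p) ^ n) := by
  have h0 : (p : ℂ) ≠ 0 := by exact_mod_cast (by linarith : p ≠ 0)
  have h1 : (p : ℂ) - 1 ≠ 0 := by exact_mod_cast (by linarith [sub_pos.2 hp] : p - 1 ≠ 0)
  have h2 : (p : ℂ) + 1 ≠ 0 := by exact_mod_cast (by linarith : p + 1 ≠ 0)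
  have e1 : (((p + 1) / p : ℝ) : ℂ) * z = (p + 1) * z / p := by push_cast; ring
  have e2 : ((1 / p : ℝ) : ℂ) * z = z / p := by push_cast; ring
  have e3 : (((p - 1) / p : ℝ) : ℂ) * z = (p - 1) * z / p := by push_cast; ring
  rw [sinhQuotient, e1, e2, e3, sinhc_of_ne_zero hz, sinhc_of_ne_zero (z := (p + 1) * z / p)
    (by positivity), sinhc_of_ne_zero (z := z / p) (by positivity),
    sinhc_of_ne_zero (z := (p - 1) * z / p) (div_ne_zero (mul_ne_zero h1 hz) h0), ← div_pow]
  have e4 : Complex.sinh (z / p) / (z / p) / (Complex.sinh ((p - 1) * z / p) / ((p - 1) * z / p))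
      = (p - 1) * (Complex.sinh (z / p) / Complex.sinh ((p - 1) * z / p)) := by
    field_simp
  have e5 : Complex.sinh ((p + 1) * z / p) / ((p + 1) * z / p) / (Complex.sinh z / z)
      = p / (p + 1) * (Complex.sinh ((p + 1) * z / p) / Complex.sinh z) := by
    field_simp
  rw [e4, e5, mul_pow, one_div, inv_pow]
  field_simp

theorem differentiableAt_sinhQuotient {p : ℝ} (n : ℕ) {z : ℂ} (h1 : sinhc z ≠ 0)
    (h2 : sinhc ((((p - 1) / p : ℝ) : ℂ) * z) ≠ 0) :
    DifferentiableAt ℂ (sinhQuotient p n) z := by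
  have hS (c : ℂ) : DifferentiableAt ℂ (fun z => sinhc (c * z)) z :=
    (differentiable_sinhc.comp (differentiable_id.const_mul c)).differentiableAt
  exact (((hS _).div differentiable_sinhc.differentiableAt h1).mul
    (((hS _).div (hS _) h2).pow n)).const_mul _

theorem analyticAt_sinhQuotient (p : ℝ) (n : ℕ) (x : ℝ) :
    AnalyticAt ℂ (sinhQuotient p n) x := by
  have hS (c : ℂ) : Continuous fun z => sinhc (c * z) :=
    differentiable_sinhc.continuous.comp (continuous_const.mul continuous_id)
  rw [Complex.analyticAt_iff_eventually_differentiableAt]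
  filter_upwards [differentiable_sinhc.continuous.continuousAt.eventually_ne
      (sinhc_ne_zero_of_real x),
    (hS (((p - 1) / p : ℝ) : ℂ)).continuousAt.eventually_ne
      (by rw [← Complex.ofReal_mul]; exact sinhc_ne_zero_of_real _)] with z h1 h2
  exact differentiableAt_sinhQuotient n h1 h2

theorem differentiableOn_sinhQuotient {p : ℝ} (hp : 1 < p) (n : ℕ) :
    DifferentiableOn ℂ (sinhQuotient p n) (Metric.ball 0 Real.pi) := by
  intro z hz
  rw [mem_ball_zero_iff] at hz
  refine (differentiableAt_sinhQuotient n (sinhc_ne_zero_of_norm_lt hz)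
    (sinhc_ne_zero_of_norm_lt ?_)).differentiableWithinAt
  have h0 : 0 ≤ (p - 1) / p := div_nonneg (by linarith) (by linarith)
  have h1 : (p - 1) / p ≤ 1 := (div_le_one (by linarith)).2 (by linarith)
  rw [norm_mul, Complex.norm_real, Real.norm_of_nonneg h0]
  exact (mul_le_of_le_one_left (norm_nonneg z) h1).trans_lt hz

theorem sinhQuotient_neg (p : ℝ) (n : ℕ) (z : ℂ) :
    sinhQuotient p n (-z) = sinhQuotient p n z := by
  have h (w : ℂ) : sinhc (-w) = sinhc w := by
    by_cases hw : w = 0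
    · simp [hw]
    · rw [sinhc_of_ne_zero hw, sinhc_of_ne_zero (neg_ne_zero.2 hw), Complex.sinh_neg, neg_div_neg_eq]
  simp only [sinhQuotient, mul_neg, h]

theorem sinhQuotient_mul_I {p : ℝ} (hp : 1 < p) (n : ℕ) {y : ℝ} (hy : y ≠ 0) :
    sinhQuotient p n (y * Complex.I) =
      ((Real.sin ((p + 1) * y / p) / Real.sin y *
        (Real.sin (y / p) ^ n / Real.sin ((p - 1) * y / p) ^ n) : ℝ) : ℂ) := by
  rw [sinhQuotient_of_ne_zero hp n (mul_ne_zero (by exact_mod_cast hy) Complex.I_ne_zero)]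
  rw [← mul_assoc, ← mul_assoc, mul_div_right_comm, mul_div_right_comm (_ * _),
    mul_div_right_comm _ Complex.I]
  simp only [Complex.sinh_mul_I, mul_pow]
  rw [mul_div_mul_right _ _ Complex.I_ne_zero,
    mul_div_mul_right _ _ (pow_ne_zero n Complex.I_ne_zero)]
  push_cast
  rfl

theorem not_isPosDefFun_sinhQuotient {p : ℝ} (hp : 1 < p) (n : ℕ) :
    ¬ IsPosDefFun fun x => sinhQuotient p n x := by
  intro h
  have hp0 : 0 < p := by linarith
  have hpi := Real.pi_pos
  obtain ⟨y, hy1, hy2⟩ : ∃ y, Real.pi * p / (p + 1) < y ∧ y < Real.pi :=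
    exists_between ((div_lt_iff₀ (by linarith)).2 (by nlinarith))
  have hy0 : 0 < y := lt_trans (by positivity) hy1
  rw [div_lt_iff₀ (by linarith)] at hy1
  have hnn := h.nonneg_imaginary (analyticAt_sinhQuotient p n)
    (differentiableOn_sinhQuotient hp n) (y := y) (by rwa [abs_of_pos hy0])
  rw [sinhQuotient_neg, sinhQuotient_mul_I hp n hy0.ne', ← Complex.ofReal_add] at hnn
  rw [Complex.zero_le_real] at hnn
  have s1 : Real.sin ((p + 1) * y / p) < 0 := by
    rw [← neg_pos, ← Real.sin_sub_pi]
    apply Real.sin_pos_of_pos_of_lt_pi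
    · rw [sub_pos, lt_div_iff₀ hp0]; linarith
    · rw [sub_lt_iff_lt_add, div_lt_iff₀ hp0]; nlinarith
  have s2 : 0 < Real.sin y := Real.sin_pos_of_pos_of_lt_pi hy0 hy2
  have s3 : 0 < Real.sin (y / p) := Real.sin_pos_of_pos_of_lt_pi (by positivity)
    ((div_lt_iff₀ hp0).2 (by nlinarith))
  have s4 : 0 < Real.sin ((p - 1) * y / p) := Real.sin_pos_of_pos_of_lt_pi
    (div_pos (mul_pos (by linarith) hy0) hp0) ((div_lt_iff₀ hp0).2 (by nlinarith))
  have := mul_neg_of_neg_of_pos (div_neg_of_neg_of_pos s1 s2)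
    (div_pos (pow_pos s3 n) (pow_pos s4 n))
  linarith

theorem sinh_prime_quotient_not_posdef (p : ℕ) (hp : p.Prime) (hp3 : 3 < p)
    (n : ℕ) (hn : 0 < n) (f : ℝ → ℝ)
    (hf : ∀ x : ℝ, x ≠ 0 →
      f x = Real.sinh ((p + 1) * x / p) / Real.sinh x *
        (Real.sinh (x / p) ^ n / Real.sinh ((p - 1) * x / p) ^ n))
    (hf0 : f 0 = (p + 1) / p * (1 / (p - 1)) ^ n) :
    ¬ IsPosDefFun fun x => ((f x : ℝ) : ℂ) := by
  have hp1 : (1 : ℝ) < p := by exact_mod_cast hp.one_lt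
  have hfe : (fun x => ((f x : ℝ) : ℂ)) = fun x : ℝ => sinhQuotient p n x := by
    ext x
    by_cases hx : x = 0
    · subst hx
      rw [hf0]
      simp [sinhQuotient, sinhc_zero]
    · rw [hf x hx, sinhQuotient_of_ne_zero hp1 n (by exact_mod_cast hx)]
      push_cast
      rfl
  rw [hfe]
  exact not_isPosDefFun_sinhQuotient hp1 n
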